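/- arXiv:2402.02720 — 2 statements merged into one kernel-verified Lean document; each statement's English description precedes it below -/
import Mathlib

section
/- Fix any time horizon T ∈ ℕ_+, discount factors λ_1,…,λ_{T-1} ∈ (0,∞), Lipschitz constant G > 0, variance budget V ∈ (0, G²·H_T], and any nonzero u ∈ X with −u ∈ X, where X ⊂ ℝ^d is closed and convex. For any online algorithm (i.e., any sequence of maps producing x_t ∈ X as a function of g_1,…,g_{t-1}), there exists a sequence of linear losses l_t(x) = ⟨g_t, x⟩ with ‖g_t‖ ≤ G for all t ∈ [1:T], such that Σ_{t=1}^T (∏_{i=t}^{T-1} λ_i²)·‖g_t‖² = V and max( Reg_T(l, u), Reg_T(l, −u) ) ≥ (1/√2)·‖u‖·√V, where Reg_T(l, w) := Σ_{t=1}^T (∏_{i=t}^{T-1} λ_i)·[l_t(x_t) − l_t(w)]. -/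
open scoped BigOperators RealInnerProductSpace

namespace DRLB

/-- sign of a boolean -/
def sg (b : Bool) : ℝ := if b then 1 else -1

/-- flip one coordinate -/
def flip {n : ℕ} (i : Fin n) (x : Fin n → Bool) : Fin n → Bool := Function.update x i (!x i)

/-- flip all coordinates -/
def neg {n : ℕ} (x : Fin n → Bool) : Fin n → Bool := fun i => !x i

/-- Dirichlet energy -/
noncomputable def en {n : ℕ} (f : (Fin n → Bool) → ℝ) : ℝ :=
  ∑ x, ∑ i, (f x - f (flip i x)) ^ 2

lemma sg_not (b : Bool) : sg (!b) = - sg b := by cases b <;> simp [sg]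

lemma sg_sq (b : Bool) : sg b ^ 2 = 1 := by cases b <;> simp [sg]

lemma flip_flip {n : ℕ} (i : Fin n) (x : Fin n → Bool) : flip i (flip i x) = x := by
  simp [flip]

lemma sum_flip {n : ℕ} (i : Fin n) (f : (Fin n → Bool) → ℝ) :
    ∑ x, f (flip i x) = ∑ x, f x :=
  Equiv.sum_comp (Function.Involutive.toPerm (flip i) (flip_flip i)) f

lemma sum_cons {n : ℕ} (f : (Fin (n+1) → Bool) → ℝ) :
    ∑ x, f x = ∑ x : Fin n → Bool, (f (Fin.cons true x) + f (Fin.cons false x)) := by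
  rw [← Equiv.sum_comp (Fin.consEquiv (fun _ : Fin (n+1) => Bool)) f, Fintype.sum_prod_type,
    Finset.sum_comm]
  refine Finset.sum_congr rfl fun x _ => ?_
  simp [Fin.consEquiv]

lemma flip_zero {n : ℕ} (b : Bool) (x : Fin n → Bool) :
    flip 0 (Fin.cons b x : Fin (n+1) → Bool) = Fin.cons (!b) x := by
  simp [flip, Fin.update_cons_zero]

lemma flip_succ {n : ℕ} (i : Fin n) (b : Bool) (x : Fin n → Bool) :
    flip i.succ (Fin.cons b x : Fin (n+1) → Bool) = Fin.cons b (flip i x) := by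
  simp [flip, Fin.cons_update]

lemma neg_cons {n : ℕ} (b : Bool) (x : Fin n → Bool) :
    neg (Fin.cons b x : Fin (n+1) → Bool) = Fin.cons (!b) (neg x) := by
  funext i
  refine Fin.cases ?_ (fun j => ?_) i <;> simp [neg]

lemma en_nonneg {n : ℕ} (f : (Fin n → Bool) → ℝ) : 0 ≤ en f :=
  Finset.sum_nonneg fun _ _ => Finset.sum_nonneg fun _ _ => sq_nonneg _

lemma en_cons {n : ℕ} (f : (Fin (n+1) → Bool) → ℝ) (g h : (Fin n → Bool) → ℝ)
    (h1 : ∀ x, f (Fin.cons true x) = g x + h x) (h0 : ∀ x, f (Fin.cons false x) = g x - h x) :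
    en f = 2 * en g + 2 * en h + 8 * ∑ x, h x ^ 2 := by
  unfold en
  rw [sum_cons]
  simp only [Fin.sum_univ_succ, flip_zero, flip_succ, h1, h0, Bool.not_true, Bool.not_false,
    Finset.mul_sum]
  rw [← Finset.sum_add_distrib, ← Finset.sum_add_distrib]
  refine Finset.sum_congr rfl fun x _ => ?_
  rw [← Finset.sum_add_distrib]
  have : ∑ i : Fin n, (2 * (g x - g (flip i x)) ^ 2 + 2 * (h x - h (flip i x)) ^ 2)
     = ∑ i : Fin n, (g x + h x - (g (flip i x) + h (flip i x))) ^ 2 +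
       ∑ i : Fin n, (g x - h x - (g (flip i x) - h (flip i x))) ^ 2 := by
    rw [← Finset.sum_add_distrib]
    exact Finset.sum_congr rfl fun i _ => by ring
  rw [this]
  ring

lemma sq_cons {n : ℕ} (f : (Fin (n+1) → Bool) → ℝ) (g h : (Fin n → Bool) → ℝ)
    (h1 : ∀ x, f (Fin.cons true x) = g x + h x) (h0 : ∀ x, f (Fin.cons false x) = g x - h x) :
    ∑ x, f x ^ 2 = 2 * ∑ x, g x ^ 2 + 2 * ∑ x, h x ^ 2 := by
  rw [sum_cons (fun x => f x ^ 2)]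
  simp only [h1, h0, Finset.mul_sum]
  rw [← Finset.sum_add_distrib]
  exact Finset.sum_congr rfl fun i _ => by ring

lemma lin_cons {n : ℕ} (f : (Fin (n+1) → Bool) → ℝ) (g h : (Fin n → Bool) → ℝ)
    (h1 : ∀ x, f (Fin.cons true x) = g x + h x) (h0 : ∀ x, f (Fin.cons false x) = g x - h x) :
    ∑ x, f x = 2 * ∑ x, g x := by
  rw [sum_cons f]
  simp only [h1, h0, Finset.mul_sum]
  exact Finset.sum_congr rfl fun i _ => by ring

lemma odd_poincare : ∀ {n : ℕ} (f : (Fin n → Bool) → ℝ), (∀ x, f (neg x) = - f x) →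
    4 * ∑ x, f x ^ 2 ≤ en f := by
  intro n
  induction n with
  | zero =>
    intro f hf
    have : ∀ x, f x = 0 := fun x => by
      have h := hf x
      rw [Subsingleton.elim (neg x) x] at h
      linarith
    simp [this, en]
  | succ n ih =>
    intro f hf
    set g : (Fin n → Bool) → ℝ := fun x => (f (Fin.cons true x) + f (Fin.cons false x)) / 2 with hg
    set h : (Fin n → Bool) → ℝ := fun x => (f (Fin.cons true x) - f (Fin.cons false x)) / 2 with hh
    have h1 : ∀ x, f (Fin.cons true x) = g x + h x := fun x => by simp only [hg, hh]; ring
    have h0 : ∀ x, f (Fin.cons false x) = g x - h x := fun x => by simp only [hg, hh]; ring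
    have go : ∀ x, g (neg x) = - g x := fun x => by
      have a := hf (Fin.cons true x)
      have b := hf (Fin.cons false x)
      simp only [neg_cons, Bool.not_true, Bool.not_false] at a b
      simp only [hg, a, b]; ring
    rw [en_cons f g h h1 h0, sq_cons f g h h1 h0]
    linarith [ih g go, en_nonneg h]

lemma even_poincare : ∀ {n : ℕ} (f : (Fin n → Bool) → ℝ), (∀ x, f (neg x) = f x) →
    8 * (∑ x, f x ^ 2 - (∑ x, f x) ^ 2 / 2 ^ n) ≤ en f := by
  intro n
  induction n with
  | zero =>
    intro f hf
    simp [en]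
  | succ n ih =>
    intro f hf
    set g : (Fin n → Bool) → ℝ := fun x => (f (Fin.cons true x) + f (Fin.cons false x)) / 2 with hg
    set h : (Fin n → Bool) → ℝ := fun x => (f (Fin.cons true x) - f (Fin.cons false x)) / 2 with hh
    have h1 : ∀ x, f (Fin.cons true x) = g x + h x := fun x => by simp only [hg, hh]; ring
    have h0 : ∀ x, f (Fin.cons false x) = g x - h x := fun x => by simp only [hg, hh]; ring
    have ge : ∀ x, g (neg x) = g x := fun x => by
      have a := hf (Fin.cons true x)
      have b := hf (Fin.cons false x)
      simp only [neg_cons, Bool.not_true, Bool.not_false] at a b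
      simp only [hg, a, b]; ring
    have ho : ∀ x, h (neg x) = - h x := fun x => by
      have a := hf (Fin.cons true x)
      have b := hf (Fin.cons false x)
      simp only [neg_cons, Bool.not_true, Bool.not_false] at a b
      simp only [hh, a, b]; ring
    rw [en_cons f g h h1 h0, sq_cons f g h h1 h0, lin_cons f g h h1 h0]
    have e : (2 * ∑ x, g x) ^ 2 / 2 ^ (n+1) = 2 * ((∑ x, g x) ^ 2 / 2 ^ n) := by
      rw [pow_succ]; field_simp; ring
    rw [e]
    linarith [ih g ge, odd_poincare h ho]

lemma rad_sq : ∀ {n : ℕ} (a : Fin n → ℝ),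
    ∑ x : Fin n → Bool, (∑ j, a j * sg (x j)) ^ 2 = 2 ^ n * ∑ j, a j ^ 2 := by
  intro n
  induction n with
  | zero => intro a; simp
  | succ n ih =>
    intro a
    rw [sum_cons]
    simp only [Fin.sum_univ_succ, Fin.cons_zero, Fin.cons_succ]
    have : ∀ x : Fin n → Bool, (a 0 * sg true + ∑ i : Fin n, a i.succ * sg (x i)) ^ 2 +
        (a 0 * sg false + ∑ i : Fin n, a i.succ * sg (x i)) ^ 2
        = 2 * a 0 ^ 2 + 2 * (∑ i : Fin n, a i.succ * sg (x i)) ^ 2 := fun x => by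
      simp only [sg]; norm_num; ring
    simp only [this]
    rw [Finset.sum_add_distrib, ← Finset.mul_sum, ← Finset.mul_sum, ih (fun i => a i.succ)]
    simp
    ring

lemma rad_flip {n : ℕ} (a : Fin n → ℝ) (i : Fin n) (x : Fin n → Bool) :
    ∑ j, a j * sg (flip i x j) = ∑ j, a j * sg (x j) - 2 * (a i * sg (x i)) := by
  have : ∀ j, a j * sg (flip i x j)
      = a j * sg (x j) - (if j = i then 2 * (a i * sg (x i)) else 0) := fun j => by
    by_cases h : j = i
    · subst h; simp [flip, sg_not]; ring
    · simp [flip, h]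
  simp only [this, Finset.sum_sub_distrib]
  simp

/-- Sharp Khintchine inequality. -/
lemma khintchine {n : ℕ} (a : Fin n → ℝ) :
    2 ^ n * √((∑ j, a j ^ 2) / 2) ≤ ∑ x : Fin n → Bool, |∑ j, a j * sg (x j)| := by
  set f : (Fin n → Bool) → ℝ := fun x => |∑ j, a j * sg (x j)| with hf
  have fe : ∀ x, f (neg x) = f x := fun x => by
    simp only [hf, neg, sg_not, mul_neg, Finset.sum_neg_distrib, abs_neg]
  have hp := even_poincare f fe
  have hsq : ∑ x, f x ^ 2 = 2 ^ n * ∑ j, a j ^ 2 := by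
    simp only [hf, sq_abs]; exact rad_sq a
  have hfl : ∀ x, (n - 2 : ℝ) * f x ≤ ∑ i, f (flip i x) := fun x => by
    calc (n - 2 : ℝ) * f x ≤ |(n - 2 : ℝ)| * f x :=
          mul_le_mul_of_nonneg_right (le_abs_self _) (abs_nonneg _)
      _ = |∑ i, ∑ j, a j * sg (flip i x j)| := by
          simp only [hf]
          rw [← abs_mul]
          simp only [rad_flip, Finset.sum_sub_distrib, ← Finset.mul_sum]
          congr 1
          simp
          ring
      _ ≤ _ := Finset.abs_sum_le_sum_abs _ _
  have hen : en f ≤ 4 * ∑ x, f x ^ 2 := by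
    have e1 : en f = ∑ x, 2 * (n * f x ^ 2 - f x * ∑ i, f (flip i x)) := by
      have : ∑ x, ∑ i, f (flip i x) ^ 2 = ∑ x, n * f x ^ 2 := by
        rw [Finset.sum_comm]
        simp only [sum_flip _ (fun x => f x ^ 2)]
        simp [Finset.mul_sum]
      have e2 : en f = ∑ x, (n * f x ^ 2 - 2 * (f x * ∑ i, f (flip i x)))
          + ∑ x, ∑ i, f (flip i x) ^ 2 := by
        unfold en
        rw [← Finset.sum_add_distrib]
        refine Finset.sum_congr rfl fun x _ => ?_
        simp only [sub_sq, Finset.sum_add_distrib, Finset.sum_sub_distrib, Finset.mul_sum]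
        simp [mul_assoc]
      rw [e2, this, ← Finset.sum_add_distrib]
      exact Finset.sum_congr rfl fun x _ => by ring
    rw [e1, Finset.mul_sum]
    refine Finset.sum_le_sum fun x _ => ?_
    have := mul_le_mul_of_nonneg_left (hfl x) (abs_nonneg _ : 0 ≤ f x)
    nlinarith
  have hN : (0:ℝ) < 2 ^ n := by positivity
  have key : (2 ^ n) ^ 2 * ((∑ j, a j ^ 2) / 2) ≤ (∑ x, f x) ^ 2 := by
    have h1 : (∑ x, f x ^ 2) / 2 ≤ (∑ x, f x) ^ 2 / 2 ^ n := by linarith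
    rw [le_div_iff₀ hN, hsq] at h1
    linarith
  have hs0 : 0 ≤ ∑ x, f x := Finset.sum_nonneg fun _ _ => abs_nonneg _
  have hA : 0 ≤ (∑ j, a j ^ 2) / 2 := by positivity
  refine (sq_le_sq₀ (by positivity) hs0).1 ?_
  rw [mul_pow, Real.sq_sqrt hA]
  exact key

lemma sum_Icc_fin (T : ℕ) (f : ℕ → ℝ) :
    ∑ t ∈ Finset.Icc 1 T, f t = ∑ i : Fin T, f (i + 1) := by
  rw [Fin.sum_univ_eq_sum_range (fun i => f (i + 1)), ← Finset.Ico_add_one_right_eq_Icc,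
    Finset.sum_Ico_eq_sum_range]
  simp [add_comm]

end DRLB

/-- Instance-dependent lower bound on the discounted regret: for any online
algorithm there exist linear losses with prescribed discounted gradient variance `V` such that
the regret against `u` or `−u` is at least `(1/√2)·‖u‖·√V`. -/
theorem discounted_regret_lower_bound
    (d T : ℕ) (hT : 1 ≤ T)
    (X : Set (EuclideanSpace ℝ (Fin d))) (hXclosed : IsClosed X) (hXconvex : Convex ℝ X)
    (lam : ℕ → ℝ) (hlam : ∀ i, 0 < lam i)
    (G : ℝ) (hG : 0 < G)
    (H : ℝ) (hH : H = ∑ i ∈ Finset.Icc 1 T, ∏ j ∈ Finset.Icc i (T-1), (lam j)^2)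
    (V : ℝ) (hV0 : 0 < V) (hVH : V ≤ G^2 * H)
    (u : EuclideanSpace ℝ (Fin d)) (hu0 : u ≠ 0) (huX : u ∈ X) (hunegX : -u ∈ X)
    (alg : ℕ → (ℕ → EuclideanSpace ℝ (Fin d)) → EuclideanSpace ℝ (Fin d))
    (halgX : ∀ t gseq, alg t gseq ∈ X)
    (hcausal : ∀ t g₁ g₂, (∀ i, 1 ≤ i → i ≤ t - 1 → g₁ i = g₂ i) → alg t g₁ = alg t g₂) :
    ∃ g : ℕ → EuclideanSpace ℝ (Fin d),
      (∀ t ∈ Finset.Icc 1 T, ‖g t‖ ≤ G) ∧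
      (∑ t ∈ Finset.Icc 1 T, (∏ i ∈ Finset.Icc t (T-1), (lam i)^2) * ‖g t‖^2 = V) ∧
      (1 / Real.sqrt 2) * ‖u‖ * Real.sqrt V ≤
        max (∑ t ∈ Finset.Icc 1 T, (∏ i ∈ Finset.Icc t (T-1), lam i) *
                (⟪g t, alg t g⟫ - ⟪g t, u⟫))
            (∑ t ∈ Finset.Icc 1 T, (∏ i ∈ Finset.Icc t (T-1), lam i) *
                (⟪g t, alg t g⟫ - ⟪g t, -u⟫)) := by
  classical
  set A : Fin T → ℝ := fun i => ∏ j ∈ Finset.Icc ((i : ℕ) + 1) (T-1), lam j with hA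
  have hHA : H = ∑ i, A i ^ 2 := by
    rw [hH, DRLB.sum_Icc_fin]
    simp only [hA, Finset.prod_pow]
  have hApos : ∀ i, 0 < A i := fun i => Finset.prod_pos fun j _ => hlam j
  have hHpos : 0 < H := by
    by_contra hc
    have : G ^ 2 * H ≤ 0 := mul_nonpos_of_nonneg_of_nonpos (by positivity) (not_lt.1 hc)
    linarith
  have hu : 0 < ‖u‖ := norm_pos_iff.2 hu0
  set s : ℝ := √(V / H) with hs
  have hs0 : 0 ≤ s := Real.sqrt_nonneg _
  have hs2 : s ^ 2 = V / H := Real.sq_sqrt (by positivity)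
  have hsG : s ≤ G := by
    refine Real.sqrt_le_iff.2 ⟨hG.le, ?_⟩
    rw [div_le_iff₀ hHpos]; exact hVH
  set c : ℝ := s / ‖u‖ with hc
  have hc0 : 0 ≤ c := by positivity
  have hcu : c * ‖u‖ = s := by rw [hc]; field_simp
  set g : (Fin T → Bool) → ℕ → EuclideanSpace ℝ (Fin d) := fun x t =>
    if h : t - 1 < T then (c * DRLB.sg (x ⟨t - 1, h⟩)) • u else 0 with hg
  have hgi : ∀ x (i : Fin T), g x (i + 1) = (c * DRLB.sg (x i)) • u := fun x i => by
    simp [hg]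
  have hnorm : ∀ x (i : Fin T), ‖g x (i + 1)‖ = s := fun x i => by
    rw [hgi, norm_smul, Real.norm_eq_abs, abs_mul, abs_of_nonneg hc0]
    have : |DRLB.sg (x i)| = 1 := by cases x i <;> simp [DRLB.sg]
    rw [this, mul_one, hcu]
  set S : (Fin T → Bool) → ℝ := fun x => ∑ i, A i * DRLB.sg (x i) with hS
  set M : (Fin T → Bool) → ℝ := fun x =>
    ∑ i : Fin T, A i * ⟪g x (i + 1), alg (i + 1) (g x)⟫ with hM
  have hMsum : ∑ x, M x = 0 := by
    simp only [hM]
    rw [Finset.sum_comm]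
    refine Finset.sum_eq_zero fun i _ => ?_
    have h := DRLB.sum_flip i (fun x => A i * ⟪g x (i + 1), alg (i + 1) (g x)⟫)
    have h2 : ∀ x, A i * ⟪g (DRLB.flip i x) (i + 1), alg (i + 1) (g (DRLB.flip i x))⟫
        = - (A i * ⟪g x (i + 1), alg (i + 1) (g x)⟫) := fun x => by
      have ha : alg (i + 1) (g (DRLB.flip i x)) = alg (i + 1) (g x) := by
        refine hcausal _ _ _ fun k hk1 hk2 => ?_
        have hki : k - 1 < (i : ℕ) := by omega
        have hkT : k - 1 < T := hki.trans i.2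
        have hne : (⟨k - 1, hkT⟩ : Fin T) ≠ i := fun h => by
          have := congrArg Fin.val h
          simp at this; omega
        simp [hg, hkT, DRLB.flip, hne]
      rw [ha, hgi, hgi]
      simp [DRLB.flip, DRLB.sg_not, real_inner_smul_left]
    simp only [h2, Finset.sum_neg_distrib] at h
    linarith
  have hlow : ∃ x ∈ (Finset.univ : Finset (Fin T → Bool)),
      (1 / Real.sqrt 2) * ‖u‖ * Real.sqrt V ≤ M x + c * ‖u‖ ^ 2 * |S x| := by
    refine Finset.exists_le_of_sum_le Finset.univ_nonempty ?_
    rw [Finset.sum_add_distrib, hMsum, zero_add,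
      ← Finset.mul_sum Finset.univ (fun x => |S x|)]
    have hk := mul_le_mul_of_nonneg_left (DRLB.khintchine A)
      (by positivity : 0 ≤ c * ‖u‖ ^ 2)
    refine le_trans (le_of_eq ?_) hk
    rw [← hHA]
    have hV : √V = s * √H := by
      rw [hs, ← Real.sqrt_mul (by positivity)]; congr 1; field_simp
    have hcu2 : c * ‖u‖ ^ 2 = s * ‖u‖ := by rw [sq, ← mul_assoc, hcu]
    rw [hV, hcu2, Real.sqrt_div hHpos.le]
    simp
    ring
  obtain ⟨x, -, hx⟩ := hlow
  refine ⟨g x, ?_, ?_, ?_⟩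
  · intro t ht
    rw [Finset.mem_Icc] at ht
    have := hnorm x ⟨t - 1, by omega⟩
    simp only [Nat.sub_add_cancel ht.1] at this
    rw [this]; exact hsG
  · rw [DRLB.sum_Icc_fin]
    simp only [hnorm, Finset.prod_pow]
    rw [← Finset.sum_mul, ← hHA, hs2]
    field_simp
  · have hR : ∀ w, ∑ t ∈ Finset.Icc 1 T, (∏ i ∈ Finset.Icc t (T-1), lam i) *
                (⟪g x t, alg t (g x)⟫ - ⟪g x t, w⟫) = M x - c * ⟪u, w⟫ * S x := fun w => by
      rw [DRLB.sum_Icc_fin, hM, hS]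
      simp only [Finset.mul_sum]
      rw [← Finset.sum_sub_distrib]
      refine Finset.sum_congr rfl fun i _ => ?_
      rw [mul_sub]
      congr 1
      rw [hgi, real_inner_smul_left]
      ring
    rw [hR, hR, inner_neg_right, real_inner_self_eq_norm_sq]
    refine hx.trans ?_
    rcases abs_cases (S x) with ⟨h, _⟩ | ⟨h, _⟩ <;> rw [h]
    · exact le_max_of_le_right (le_of_eq (by ring))
    · exact le_max_of_le_left (le_of_eq (by ring))
end

section
/- Let ε > 0, let λ_t ∈ (0,∞) for t ≥ 0 with λ_0 := 1, and consider the 1D FTRL-based magnitude learner on [0,∞): initialize v_1 = s_1 = h_1 = 0; in round t, if h_t = 0 set x̃_t = 0, otherwise set x̃_t = ε·erfi( s_t / (2√(v_t + 2h_t s_t + 16h_t²)) ) − ε·h_t/√(v_t + 2h_t s_t + 16h_t²) · exp( s_t² / (4(v_t + 2h_t s_t + 16h_t²)) ), where erfi(x) := ∫₀ˣ exp(u²) du; predict x_t = max(x̃_t, 0); receive a subgradient g_t ∈ ∂l_t(x_t) of a convex loss l_t on [0,∞); set g_{t,clip} = the projection of g_t onto [−λ_{t-1}h_t, λ_{t-1}h_t]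 and h_{t+1} = max(λ_{t-1}h_t, |g_t|); set g̃_{t,clip} = 0 if g_{t,clip}·x̃_t < g_{t,clip}·x_t and g̃_{t,clip} = g_{t,clip} otherwise; update v_{t+1} = λ_{t-1}²·v_t + g̃_{t,clip}² and s_{t+1} = λ_{t-1}·s_t − g̃_{t,clip}. Then for all T ∈ ℕ_+, all convex losses l_{1:T} on [0,∞), all comparators u ∈ [0,∞), and all stability window lengths τ ∈ [1:T]: Reg_T := Σ_{t=1}^T (∏_{i=t}^{T-1} λ_i)·[l_t(x_t) − l_t(u)] ≤ ε·√(V_T + 2·G_T·S + 16·G_T²) + u·(S + G_T) + (max_{t∈[T−τ+1:T]} x_t)·G_T + (∏_{t=T−τ}^{T-1} λ_t)·(max_{t∈[1:T−τ]} x_t)·G_{T−τ}, where S = 8·G_T·(1 + √(log(2u·ε^{-1} + 1)))² + 2·√(V_T + 16·G_T²)·(1 + √(log(2u·ε^{-1} + 1))), and the last term is zero when τ = T (maximum over the empty set is 0 and G_0 := 0). -/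
open scoped BigOperators

/-- The (rescaled) imaginary error function `erfi(x) = ∫₀ˣ exp(u²) du`. -/
noncomputable def erfi (x : ℝ) : ℝ := ∫ u in (0:ℝ)..x, Real.exp (u^2)

lemma erfi_deriv (x : ℝ) : HasDerivAt erfi (Real.exp (x^2)) x := by
  have hc : Continuous (fun u : ℝ => Real.exp (u^2)) := by fun_prop
  exact intervalIntegral.integral_hasDerivAt_right (hc.intervalIntegrable _ _)
    (hc.stronglyMeasurableAtFilter _ _) hc.continuousAt

lemma erfi_zero : erfi 0 = 0 := by simp [erfi]

lemma erfi_neg (x : ℝ) : erfi (-x) = - erfi x := by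
  unfold erfi
  have := intervalIntegral.integral_comp_neg (fun u : ℝ => Real.exp (u^2)) (a := 0) (b := x)
  simp only [neg_zero, even_two, Even.neg_pow] at this
  rw [this, intervalIntegral.integral_symm]

lemma erfi_one : Real.exp 1 ≤ 2 * erfi 1 := by
  have h1 : ∫ u in (0:ℝ)..1, (1 + u^2 + u^4/2) ≤ erfi 1 := by
    unfold erfi
    apply intervalIntegral.integral_mono_on (by norm_num)
    · exact (by fun_prop : Continuous (fun u : ℝ => 1 + u^2 + u^4/2)).intervalIntegrable _ _
    · exact (by fun_prop : Continuous (fun u : ℝ => Real.exp (u^2))).intervalIntegrable _ _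
    · intro x hx
      have := Real.quadratic_le_exp_of_nonneg (sq_nonneg x)
      nlinarith
  have h2 : ∫ u in (0:ℝ)..1, (1 + u^2 + u^4/2) = 43/30 := by
    have hd : ∀ x ∈ Set.uIcc (0:ℝ) 1, HasDerivAt (fun u : ℝ => u + u^3/3 + u^5/10) (1 + x^2 + x^4/2) x := by
      intro x _
      have := ((hasDerivAt_id x).add ((hasDerivAt_pow 3 x).div_const 3)).add
        ((hasDerivAt_pow 5 x).div_const 10)
      refine HasDerivAt.congr_deriv this ?_
      norm_num
      ring
    rw [intervalIntegral.integral_eq_sub_of_hasDerivAt hd]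
    · norm_num
    · exact (by fun_prop : Continuous (fun u : ℝ => 1 + u^2 + u^4/2)).intervalIntegrable _ _
  have := Real.exp_one_lt_d9
  linarith

lemma erfi_nonneg {x : ℝ} (hx : 0 ≤ x) : 0 ≤ erfi x :=
  intervalIntegral.integral_nonneg hx (fun _ _ => (Real.exp_pos _).le)

lemma erfi_lower_aux {w : ℝ} (hw : 0 ≤ w) : Real.exp (w^2) - 1 ≤ 2 * w * erfi w := by
  have hd : ∀ x : ℝ, HasDerivAt (fun y => 2 * y * erfi y - Real.exp (y^2)) (2 * erfi x) x := by
    intro x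
    have := (((hasDerivAt_id x).const_mul 2).mul (erfi_deriv x)).sub ((hasDerivAt_pow 2 x).exp)
    refine HasDerivAt.congr_deriv this ?_
    simp
    ring
  have hm : MonotoneOn (fun y => 2 * y * erfi y - Real.exp (y^2)) (Set.Ici 0) := by
    apply monotoneOn_of_deriv_nonneg (convex_Ici 0)
    · exact fun x _ => (hd x).continuousAt.continuousWithinAt
    · exact fun x _ => (hd x).differentiableAt.differentiableWithinAt
    · intro x hx
      rw [(hd x).deriv]
      have : 0 ≤ x := by simp at hx; exact hx.le
      have := erfi_nonneg this
      linarith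
  have := hm (Set.mem_Ici.2 le_rfl) (Set.mem_Ici.2 hw) hw
  simp at this
  linarith

lemma erfi_lower (w : ℝ) : Real.exp (w^2) - 1 ≤ 2 * w * erfi w := by
  rcases le_total 0 w with h | h
  · exact erfi_lower_aux h
  · have := erfi_lower_aux (w := -w) (by linarith)
    rw [erfi_neg] at this
    simp at this
    linarith

lemma exp_aux {b : ℝ} (hb : 0 ≤ b) : 2 * (b+1)^2 * b ≤ Real.exp (2*b+1) := by
  have h := Real.sum_le_exp_of_nonneg (x := 2*b+1) (by linarith) 5
  refine le_trans ?_ h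
  simp [Finset.sum_range_succ, Nat.factorial]
  have := pow_nonneg hb 2
  have := pow_nonneg hb 3
  have := pow_nonneg hb 4
  nlinarith

lemma erfi_strong {w : ℝ} (hw : 1 ≤ w) :
    Real.exp (w^2) + w * (Real.exp ((w-1)^2) - 1) ≤ 2 * w * erfi w := by
  have hd : ∀ x : ℝ, 0 < x → HasDerivAt
      (fun y => 2 * erfi y - Real.exp (y^2) / y - Real.exp ((y-1)^2))
      (Real.exp (x^2) / x^2 - Real.exp ((x-1)^2) * (2 * (x-1))) x := by
    intro x hx
    have := (((erfi_deriv x).const_mul 2).sub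
      (((hasDerivAt_pow 2 x).exp).div (hasDerivAt_id x) hx.ne')).sub
      ((((hasDerivAt_id x).sub_const 1).pow 2).exp)
    refine HasDerivAt.congr_deriv this ?_
    simp
    field_simp
    ring
  have hm : MonotoneOn (fun y => 2 * erfi y - Real.exp (y^2) / y - Real.exp ((y-1)^2))
      (Set.Ici 1) := by
    apply monotoneOn_of_deriv_nonneg (convex_Ici 1)
    · exact fun x hx => (hd x (by simp at hx; linarith)).continuousAt.continuousWithinAt
    · exact fun x hx => (hd x (by simp at hx; linarith)).differentiableAt.differentiableWithinAt
    · intro x hx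
      have hx1 : 1 < x := by simpa using hx
      have hx0 : 0 < x := by linarith
      rw [(hd x hx0).deriv, sub_nonneg, le_div_iff₀ (by positivity)]
      have h1 := exp_aux (b := x-1) (by linarith)
      have h2 : Real.exp (x^2) = Real.exp ((x-1)^2) * Real.exp (2*(x-1)+1) := by
        rw [← Real.exp_add]; ring_nf
      rw [h2]
      have := mul_le_mul_of_nonneg_left h1 (Real.exp_pos ((x-1)^2)).le
      refine le_trans (le_of_eq ?_) this
      ring
  have h := hm (Set.mem_Ici.2 le_rfl) (Set.mem_Ici.2 hw) hw
  simp at h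
  have h1 := erfi_one
  have h0 : 0 < w := by linarith
  have h2 : Real.exp (w^2) / w + (Real.exp ((w-1)^2) - 1) ≤ 2 * erfi w := by linarith
  have h3 := mul_le_mul_of_nonneg_left h2 h0.le
  rw [mul_add, mul_div_cancel₀ _ h0.ne'] at h3
  linarith

noncomputable def Psi (z s : ℝ) : ℝ :=
  s * erfi (s / (2 * Real.sqrt z)) - Real.sqrt z * Real.exp ((s / (2 * Real.sqrt z))^2)

noncomputable def dPsi (k z s : ℝ) : ℝ :=
  erfi (s / (2 * Real.sqrt z)) - k / Real.sqrt z * Real.exp ((s / (2 * Real.sqrt z))^2)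

lemma w_deriv (z s h c : ℝ) (hz : 0 < z + 2*h*c + c^2) :
    HasDerivAt (fun c => Real.sqrt (z + 2*h*c + c^2)) ((h+c) / Real.sqrt (z + 2*h*c + c^2)) c ∧
    HasDerivAt (fun c => (s+c) / (2 * Real.sqrt (z + 2*h*c + c^2)))
      (1 / (2 * Real.sqrt (z + 2*h*c + c^2)) -
        (s+c) * (h+c) / (2 * Real.sqrt (z + 2*h*c + c^2)^3)) c := by
  have hq : 0 < Real.sqrt (z + 2*h*c + c^2) := Real.sqrt_pos.2 hz
  have h0 : HasDerivAt (fun c : ℝ => z + 2*h*c + c^2) (2*h + 2*c) c := by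
    have := (((hasDerivAt_id c).const_mul (2*h)).const_add z).add (hasDerivAt_pow 2 c)
    refine HasDerivAt.congr_deriv this ?_
    simp
  have h1 : HasDerivAt (fun c => Real.sqrt (z + 2*h*c + c^2))
      ((h+c) / Real.sqrt (z + 2*h*c + c^2)) c := by
    convert h0.sqrt hz.ne' using 1
    field_simp
  refine ⟨h1, ?_⟩
  have := ((hasDerivAt_id c).const_add s).div (h1.const_mul 2) (by positivity)
  refine HasDerivAt.congr_deriv this ?_
  simp only [id]
  field_simp

lemma Psi_deriv (z s h c : ℝ) (hz : 0 < z + 2*h*c + c^2) :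
    HasDerivAt (fun c => Psi (z + 2*h*c + c^2) (s+c)) (dPsi (h+c) (z + 2*h*c + c^2) (s+c)) c := by
  obtain ⟨h1, h2⟩ := w_deriv z s h c hz
  have hq : 0 < Real.sqrt (z + 2*h*c + c^2) := Real.sqrt_pos.2 hz
  unfold Psi dPsi
  have h3 := (((hasDerivAt_id c).const_add s).mul ((erfi_deriv _).comp c h2)).sub
    (h1.mul ((h2.pow 2).exp))
  refine HasDerivAt.congr_deriv h3 ?_
  simp only [id, Function.comp, Pi.pow_apply, Pi.div_apply, show (2-1:ℕ) = 1 from rfl, pow_one, Nat.cast_ofNat]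
  generalize Real.sqrt (z + 2*h*c + c^2) = q at *
  generalize Real.exp _ = E at *
  generalize erfi _ = R at *
  field_simp
  ring

lemma dPsi_deriv (z s h c : ℝ) (hz : 0 < z + 2*h*c + c^2) :
    HasDerivAt (fun c => dPsi (h+c) (z + 2*h*c + c^2) (s+c))
     (Real.exp (((s+c) / (2 * Real.sqrt (z + 2*h*c + c^2)))^2) / (2 * Real.sqrt (z + 2*h*c + c^2)) *
      (((h+c)*(s+c)/(z + 2*h*c + c^2))^2 - 2 * ((h+c)*(s+c)/(z + 2*h*c + c^2)) - 1
        + 2 * (h+c)^2/(z + 2*h*c + c^2))) c := by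
  obtain ⟨h1, h2⟩ := w_deriv z s h c hz
  have hq : 0 < Real.sqrt (z + 2*h*c + c^2) := Real.sqrt_pos.2 hz
  have hsq : z + 2*h*c + c^2 = Real.sqrt (z + 2*h*c + c^2) ^ 2 := (Real.sq_sqrt hz.le).symm
  unfold dPsi
  have h3 := ((erfi_deriv _).comp c h2).sub
    ((((hasDerivAt_id c).const_add h).div h1 hq.ne').mul ((h2.pow 2).exp))
  refine HasDerivAt.congr_deriv h3 ?_
  simp only [id, Function.comp, Pi.pow_apply, Pi.div_apply, show (2-1:ℕ) = 1 from rfl, pow_one, Nat.cast_ofNat]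
  generalize Real.exp _ = E at *
  generalize hqq : Real.sqrt (z + 2*h*c + c^2) = q at *
  rw [hsq]
  clear h1 h2 h3 hsq hqq
  field_simp
  ring

lemma Psi_step (v s h c : ℝ) (hh : 0 < h) (hv : 0 ≤ v) (hs : -h ≤ s) (hc1 : -h ≤ c) (hc2 : c ≤ h)
    (hsc : -h ≤ s + c) :
    Psi (v + c^2 + 2*h*(s+c) + 16*h^2) (s+c) ≤ Psi (v + 2*h*s + 16*h^2) s
      + c * dPsi h (v + 2*h*s + 16*h^2) s := by
  set z := v + 2*h*s + 16*h^2 with hzdef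
  set D := Set.Icc (max (-h) (-h-s)) h with hD
  have hpos : ∀ y ∈ D, 14*h^2 ≤ z + 2*h*y + y^2 ∧ 16*h^2 + 2*h*(s+y) ≤ z + 2*h*y + y^2 := by
    intro y hy
    obtain ⟨a, b⟩ := hy
    have a2 := le_trans (le_max_right _ _) a
    constructor
    · have := mul_nonneg hh.le (by linarith : 0 ≤ s + y + h)
      nlinarith [sq_nonneg y]
    · nlinarith [sq_nonneg y]
  have hh2 : 0 < h^2 := by positivity
  have hzp : ∀ y ∈ D, 0 < z + 2*h*y + y^2 := fun y hy => by
    have := (hpos y hy).1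
    linarith
  have h0D : (0:ℝ) ∈ D := ⟨max_le (by linarith) (by linarith), hh.le⟩
  have hcD : c ∈ D := ⟨max_le (by linarith) (by linarith), hc2⟩
  have hcc : ConcaveOn ℝ D (fun c => Psi (z + 2*h*c + c^2) (s+c)) := by
    apply concaveOn_of_hasDerivWithinAt2_nonpos (convex_Icc _ _)
      (f' := fun c => dPsi (h+c) (z + 2*h*c + c^2) (s+c))
      (f'' := fun c => (Real.exp (((s+c) / (2 * Real.sqrt (z + 2*h*c + c^2)))^2)
        / (2 * Real.sqrt (z + 2*h*c + c^2)) *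
      (((h+c)*(s+c)/(z + 2*h*c + c^2))^2 - 2 * ((h+c)*(s+c)/(z + 2*h*c + c^2)) - 1
        + 2 * (h+c)^2/(z + 2*h*c + c^2))))
    · exact fun y hy => (Psi_deriv z s h y (hzp y hy)).continuousAt.continuousWithinAt
    · exact fun y hy => (Psi_deriv z s h y (hzp y (interior_subset hy))).hasDerivWithinAt
    · exact fun y hy => (dPsi_deriv z s h y (hzp y (interior_subset hy))).hasDerivWithinAt
    · intro y hy
      have hy := interior_subset hy
      obtain ⟨p1, p2⟩ := hpos y hy
      have p3 := hzp y hy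
      obtain ⟨a, b⟩ := hy
      have a1 := le_trans (le_max_left _ _) a
      have a2 := le_trans (le_max_right _ _) a
      apply mul_nonpos_of_nonneg_of_nonpos (by positivity)
      generalize z + 2*h*y + y^2 = Z at *
      have k0 : 0 ≤ h + y := by linarith
      have k2 : h + y ≤ 2*h := by linarith
      have ksq : (h+y)^2 ≤ 4*h^2 := by nlinarith
      rcases le_total 0 (s+y) with hs0 | hs0
      · have e1 : 2 * (h+y)^2/Z ≤ 1 := by
          rw [div_le_one p3]; nlinarith
        have e2 : (h+y)*(s+y)/Z ≤ 1 := by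
          rw [div_le_one p3]; nlinarith
        have e3 : 0 ≤ (h+y)*(s+y)/Z := by positivity
        nlinarith
      · have e1 : 2 * (h+y)^2/Z ≤ 4/7 := by
          rw [div_le_iff₀ p3]; nlinarith
        have e2 : -(1/7) ≤ (h+y)*(s+y)/Z := by
          rw [le_div_iff₀ p3]
          nlinarith [mul_nonneg k0 (by linarith : 0 ≤ s + y + h)]
        have e3 : (h+y)*(s+y)/Z ≤ 0 := 
          div_nonpos_of_nonpos_of_nonneg (mul_nonpos_of_nonneg_of_nonpos k0 hs0) p3.le
        nlinarith
  have hd0 := Psi_deriv z s h 0 (hzp 0 h0D)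
  have e1 : v + c^2 + 2*h*(s+c) + 16*h^2 = z + 2*h*c + c^2 := by rw [hzdef]; ring
  rw [e1]
  rcases lt_trichotomy c 0 with hc | hc | hc
  · have := hcc.le_slope_of_hasDerivAt hcD h0D hc hd0
    rw [slope_def_field, le_div_iff₀ (by linarith)] at this
    simp at this
    linarith
  · subst hc; simp
  · have := hcc.slope_le_of_hasDerivAt h0D hcD hc hd0
    rw [slope_def_field, div_le_iff₀ (by linarith)] at this
    simp at this
    linarith

lemma Psi_scale (a z s : ℝ) (ha : 0 < a) : Psi (a^2*z) (a*s) = a * Psi z s := by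
  have e : Real.sqrt (a^2*z) = a * Real.sqrt z := by
    rw [Real.sqrt_mul (sq_nonneg a), Real.sqrt_sq ha.le]
  have e2 : a * s / (2 * (a * Real.sqrt z)) = s / (2 * Real.sqrt z) := by
    rw [show 2 * (a * Real.sqrt z) = a * (2 * Real.sqrt z) by ring, mul_div_mul_left _ _ ha.ne']
  unfold Psi
  rw [e, e2]
  ring

lemma dPsi_scale (a k z s : ℝ) (ha : 0 < a) : dPsi (a*k) (a^2*z) (a*s) = dPsi k z s := by
  have e : Real.sqrt (a^2*z) = a * Real.sqrt z := by
    rw [Real.sqrt_mul (sq_nonneg a), Real.sqrt_sq ha.le]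
  have e2 : a * s / (2 * (a * Real.sqrt z)) = s / (2 * Real.sqrt z) := by
    rw [show 2 * (a * Real.sqrt z) = a * (2 * Real.sqrt z) by ring, mul_div_mul_left _ _ ha.ne']
  unfold dPsi
  rw [e, e2, mul_div_mul_left _ _ ha.ne']

lemma Psi_anti (s z z' : ℝ) (hz : 0 < z) (hzz : z ≤ z') : Psi z' s ≤ Psi z s := by
  have hd : ∀ q : ℝ, 0 < q → HasDerivAt
      (fun q => s * erfi (s / (2*q)) - q * Real.exp ((s / (2*q))^2))
      (-Real.exp ((s / (2*q))^2)) q := by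
    intro q hq
    have h1 : HasDerivAt (fun q : ℝ => s / (2*q)) (-(s / (2*q^2))) q := by
      have := (hasDerivAt_const q s).div ((hasDerivAt_id q).const_mul 2) (by simpa using hq.ne')
      refine HasDerivAt.congr_deriv this ?_
      simp only [id]
      field_simp
      ring
    have h3 := (((erfi_deriv _).comp q h1).const_mul s).sub
      ((hasDerivAt_id q).mul ((h1.pow 2).exp))
    refine HasDerivAt.congr_deriv h3 ?_
    simp only [id, Pi.pow_apply, show (2-1:ℕ) = 1 from rfl, pow_one, Nat.cast_ofNat]
    generalize Real.exp _ = E at *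
    clear h1 h3
    field_simp
    ring
  have hm : AntitoneOn (fun q => s * erfi (s / (2*q)) - q * Real.exp ((s / (2*q))^2))
      (Set.Ioi 0) := by
    apply antitoneOn_of_deriv_nonpos (convex_Ioi 0)
    · exact fun x hx => (hd x hx).continuousAt.continuousWithinAt
    · exact fun x hx => (hd x (interior_subset hx)).differentiableAt.differentiableWithinAt
    · intro x hx
      rw [(hd x (interior_subset hx)).deriv]
      have := Real.exp_pos ((s / (2*x))^2)
      linarith
  exact hm (Set.mem_Ioi.2 (Real.sqrt_pos.2 hz)) (Set.mem_Ioi.2 (Real.sqrt_pos.2 (hz.trans_le hzz)))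
    (Real.sqrt_le_sqrt hzz)

lemma Psi_zero : Psi 0 0 = 0 := by simp [Psi]

lemma Psi_lower (z s : ℝ) (hz : 0 ≤ z) : -Psi z s ≤ Real.sqrt z := by
  rcases hz.eq_or_lt with rfl | hz
  · simp [Psi, erfi_zero]
  · have hq := Real.sqrt_pos.2 hz
    have h := mul_le_mul_of_nonneg_left (erfi_lower (s / (2 * Real.sqrt z))) hq.le
    have e : Real.sqrt z * (2 * (s / (2 * Real.sqrt z)) * erfi (s / (2 * Real.sqrt z)))
        = s * erfi (s / (2 * Real.sqrt z)) := by field_simp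
    rw [e] at h
    unfold Psi
    linarith

lemma Psi_final (eps u v V h s S : ℝ) (heps : 0 < eps) (hu : 0 ≤ u) (hv : 0 ≤ v) (hvV : v ≤ V)
    (hh : 0 ≤ h) (hs : -h ≤ s) (hhs : h = 0 → s = 0)
    (hS : S = 8 * h * (1 + Real.sqrt (Real.log (2 * u * eps⁻¹ + 1)))^2
        + 2 * Real.sqrt (V + 16 * h^2)
          * (1 + Real.sqrt (Real.log (2 * u * eps⁻¹ + 1)))) :
    u * s - eps * Psi (v + 2*h*s + 16*h^2) s ≤
      eps * Real.sqrt (V + 2 * h * S + 16 * h^2) + u * S := by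
  have hu1 : 1 ≤ 2 * u * eps⁻¹ + 1 := by
    have : 0 ≤ 2 * u * eps⁻¹ := by positivity
    linarith
  have hlog : 0 ≤ Real.log (2 * u * eps⁻¹ + 1) := Real.log_nonneg hu1
  have hexp : Real.exp (Real.log (2 * u * eps⁻¹ + 1)) = 2 * u * eps⁻¹ + 1 :=
    Real.exp_log (by linarith)
  generalize hL : Real.log (2 * u * eps⁻¹ + 1) = L at *
  set A := 1 + Real.sqrt L with hA
  have hr := Real.sqrt_nonneg L
  have hA1 : 1 ≤ A := by linarith
  have hV : 0 ≤ V := hv.trans hvV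
  have hS0 : 0 ≤ S := by rw [hS]; positivity
  have hz : 0 ≤ v + 2*h*s + 16*h^2 := by nlinarith
  rcases le_or_gt s S with hsS | hsS
  · have h1 := Psi_lower _ s hz
    have h2 : Real.sqrt (v + 2*h*s + 16*h^2) ≤ Real.sqrt (V + 2 * h * S + 16 * h^2) := by
      apply Real.sqrt_le_sqrt
      nlinarith
    nlinarith [mul_le_mul_of_nonneg_left hsS hu, mul_le_mul_of_nonneg_left (h1.trans h2) heps.le]
  · have hs0 : 0 < s := hS0.trans_lt hsS
    suffices hK : u * s ≤ eps * Psi (v + 2*h*s + 16*h^2) s by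
      have : 0 ≤ eps * Real.sqrt (V + 2 * h * S + 16 * h^2) + u * S := by positivity
      linarith
    rcases hz.eq_or_lt with hz0 | hz0
    · exfalso
      have hh0 : h = 0 := by nlinarith [mul_nonneg hh hs0.le]
      exact hs0.ne' (hhs hh0)
    have hq := Real.sqrt_pos.2 hz0
    have hqs := Real.sq_sqrt hz
    have hB := Real.sqrt_nonneg (V + 16 * h^2)
    have hBs := Real.sq_sqrt (by positivity : 0 ≤ V + 16 * h^2)
    set B := Real.sqrt (V + 16 * h^2)
    have key : 4 * A^2 * (v + 2*h*s + 16*h^2) ≤ s^2 := by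
      have e1 : 2*B*A ≤ s := by
        have : 0 ≤ 8 * h * A^2 := by positivity
        linarith
      have e2 : 2*B*A ≤ s - 8*h*A^2 := by linarith
      have e3 : (2*B*A)*(2*B*A) ≤ s * (s - 8*h*A^2) :=
        mul_le_mul e1 e2 (by positivity) hs0.le
      have e4 : 4*A^2*(v + 16*h^2) ≤ (2*B*A)*(2*B*A) := by
        have : (2*B*A)*(2*B*A) = 4*A^2*B^2 := by ring
        rw [this, hBs]
        apply mul_le_mul_of_nonneg_left (by linarith) (by positivity)
      nlinarith
    unfold Psi
    generalize hqq : Real.sqrt (v + 2*h*s + 16*h^2) = q at *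
    rw [← hqs] at key
    have hw : A ≤ s / (2*q) := by
      rw [le_div_iff₀ (by positivity)]
      apply le_of_sq_le_sq _ hs0.le
      nlinarith
    have hst := erfi_strong (hA1.trans hw)
    have hw1 : L ≤ (s/(2*q) - 1)^2 := by
      rw [← Real.sq_sqrt hlog]
      apply pow_le_pow_left₀ hr
      linarith
    have he := Real.exp_le_exp.2 hw1
    rw [hexp] at he
    have hsw : s = 2 * (s / (2*q)) * q := by field_simp
    generalize hww : s / (2*q) = w at *
    have hw0 : 0 ≤ w := by linarith
    have h5 : Real.exp (w^2) + w * (2 * u * eps⁻¹) ≤ 2 * w * erfi w := by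
      have := mul_le_mul_of_nonneg_left (by linarith : 2 * u * eps⁻¹ ≤ Real.exp ((w-1)^2) - 1) hw0
      linarith
    have h6 := mul_le_mul_of_nonneg_left h5 (by positivity : 0 ≤ eps * q)
    have h7 : eps * q * (Real.exp (w^2) + w * (2 * u * eps⁻¹)) = eps * q * Real.exp (w^2)
        + u * (2 * w * q) := by field_simp
    rw [h7, ← hsw] at h6
    have h8 : eps * q * (2 * w * erfi w) = eps * (s * erfi w) := by
      rw [hsw]; ring
    rw [h8] at h6
    linarith

lemma dPsi_neg (h z s : ℝ) (hh : 0 < h) (hz : 0 < z) (hs : s ≤ 0) : dPsi h z s < 0 := by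
  have hq := Real.sqrt_pos.2 hz
  have h1 : erfi (s / (2 * Real.sqrt z)) ≤ 0 := by
    have : 0 ≤ erfi (-(s / (2 * Real.sqrt z))) := by
      apply erfi_nonneg
      have : s / (2 * Real.sqrt z) ≤ 0 := div_nonpos_of_nonpos_of_nonneg hs (by positivity)
      linarith
    rw [erfi_neg] at this
    linarith
  have h2 : 0 < h / Real.sqrt z * Real.exp ((s / (2 * Real.sqrt z))^2) := by positivity
  unfold dPsi
  linarith

set_option maxHeartbeats 1000000 in
lemma one_step (eps a h v s xt x g gc gt h' v' s' u : ℝ) (heps : 0 < eps) (ha : 0 < a)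
    (hu : 0 ≤ u)
    (ih : 0 ≤ h) (iv : 0 ≤ v) (is : -h ≤ s) (iz : h = 0 → s = 0 ∧ v = 0)
    (hxt : (h = 0 → xt = 0) ∧
      (h ≠ 0 → xt =
        eps * erfi (s / (2 * Real.sqrt (v + 2 * h * s + 16 * h^2)))
        - eps * h / Real.sqrt (v + 2 * h * s + 16 * h^2)
          * Real.exp (s^2 / (4 * (v + 2 * h * s + 16 * h^2)))))
    (hx : x = max xt 0)
    (hgc : gc = max (-(a * h)) (min g (a * h)))
    (hh : h' = max (a * h) |g|)
    (hgt : gt = if gc * xt < gc * x then 0 else gc)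
    (hv : v' = a^2 * v + gt^2)
    (hs : s' = a * s - gt) :
    (0 ≤ h' ∧ 0 ≤ v' ∧ -h' ≤ s' ∧ (h' = 0 → s' = 0 ∧ v' = 0)) ∧
    eps * Psi (v' + 2*h'*s' + 16*h'^2) s' ≤ a * (eps * Psi (v + 2*h*s + 16*h^2) s) - gt * xt ∧
    g * (x - u) ≤ gt * (xt - u) + (h' - a * h) * (x + u) ∧ gt^2 ≤ g^2 ∧ 0 ≤ x := by
  have hah : 0 ≤ a * h := by positivity
  have hx0 : 0 ≤ x := by rw [hx]; exact le_max_right _ _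
  have hxx : xt ≤ x := by rw [hx]; exact le_max_left _ _
  have hh1 : a * h ≤ h' := by rw [hh]; exact le_max_left _ _
  have hh2 : |g| ≤ h' := by rw [hh]; exact le_max_right _ _
  have hgc1 : -(a*h) ≤ gc := by rw [hgc]; exact le_max_left _ _
  have hgc2 : gc ≤ a*h := by rw [hgc]; exact max_le (by linarith) (min_le_right _ _)
  have hgcabs : |g - gc| ≤ h' - a*h ∧ gc^2 ≤ g^2 := by
    have g1 := le_abs_self g
    have g2 := neg_abs_le g
    rcases le_total g (a*h) with c1 | c1
    · rw [min_eq_left c1] at hgc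
      rcases le_total (-(a*h)) g with c2 | c2
      · rw [max_eq_right c2] at hgc
        subst hgc
        simp
        linarith
      · rw [max_eq_left c2] at hgc
        constructor
        · rw [abs_le]; constructor <;> linarith
        · nlinarith
    · rw [min_eq_right c1, max_eq_right (by linarith)] at hgc
      constructor
      · rw [abs_le]; constructor <;> linarith
      · nlinarith
  have hgtc : gt = 0 ∨ gt = gc := by
    rw [hgt]; split_ifs <;> simp
  have hgt1 : -(a*h) ≤ gt := by rcases hgtc with r | r <;> rw [r] <;> linarith
  have hgt2 : gt ≤ a*h := by rcases hgtc with r | r <;> rw [r] <;> linarith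
  have hxt' : 0 < h → xt = eps * dPsi h (v + 2*h*s + 16*h^2) s := by
    intro hp
    have hz : 0 ≤ v + 2*h*s + 16*h^2 := by nlinarith
    rw [hxt.2 hp.ne']
    unfold dPsi
    rw [div_pow, mul_pow, Real.sq_sqrt hz]
    norm_num
    ring
  have hs1 : -(a*h) ≤ s' := by
    have has : -(a*h) ≤ a*s := by nlinarith
    rw [hs]
    by_cases hpos : 0 < gt
    · have hgg : gt = gc := by
        rcases hgtc with r | r
        · linarith
        · exact r
      have hnl : ¬ (gc * xt < gc * x) := by
        intro hc
        rw [if_pos hc] at hgt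
        linarith
      have hxt0 : 0 ≤ xt := by
        by_contra hneg
        apply hnl
        rw [← hgg]
        apply mul_lt_mul_of_pos_left _ hpos
        linarith
      have hhp : 0 < h := by
        rcases ih.eq_or_lt with r | r
        · rw [← r] at hgt2; linarith
        · exact r
      have hz : 0 < v + 2*h*s + 16*h^2 := by nlinarith [mul_pos hhp hhp]
      have hs0 : 0 ≤ s := by
        by_contra hneg
        have := dPsi_neg h _ s hhp hz (by linarith)
        rw [hxt' hhp] at hxt0
        nlinarith
      have := mul_nonneg ha.le hs0
      linarith
    · linarith
  have hz0 : h = 0 → gt = 0 := by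
    intro r
    rw [r] at hgt1 hgt2
    linarith
  refine ⟨⟨by linarith, by rw [hv]; positivity, by linarith, ?_⟩, ?_, ?_, ?_, hx0⟩
  · intro r
    have : h = 0 := by
      have : a * h = 0 := by linarith
      rcases mul_eq_zero.1 this with q | q
      · linarith
      · exact q
    rw [hs, hv, hz0 this, (iz this).1, (iz this).2]
    simp
  · rcases ih.eq_or_lt with r | r
    · have r := r.symm
      have e1 : s' = 0 := by rw [hs, hz0 r, (iz r).1]; simp
      have e2 : v' = 0 := by rw [hv, hz0 r, (iz r).2]; simp
      rw [e1, e2, hz0 r, r, (iz r).1, (iz r).2]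
      simp only [mul_zero, zero_mul, add_zero, zero_add, sub_zero, ne_eq, OfNat.ofNat_ne_zero,
        not_false_eq_true, zero_pow, Psi_zero]
      have : Psi (16 * h'^2) 0 ≤ 0 := by
        simp [Psi]
      nlinarith
    · have hp : 0 < a * h := mul_pos ha r
      have st := Psi_step (a^2*v) (a*s) (a*h) (-gt) hp (by positivity) (by nlinarith)
        (by linarith) (by linarith) (by linarith)
      have e1 : a^2*v + 2*(a*h)*(a*s) + 16*(a*h)^2 = a^2 * (v + 2*h*s+16*h^2) := by ring
      have e2 : a^2*v + (-gt)^2 + 2*(a*h)*(a*s + -gt) + 16*(a*h)^2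
          = v' + 2*(a*h)*s' + 16*(a*h)^2 := by rw [hv, hs]; ring
      have e3 : a*s + -gt = s' := by rw [hs]; ring
      rw [e2, e1, e3, Psi_scale _ _ _ ha, dPsi_scale _ _ _ _ ha] at st
      have hv'0 : 0 ≤ v' := by rw [hv]; positivity
      have pz1 : 0 < v' + 2*(a*h)*s' + 16*(a*h)^2 := by
        have q1 := mul_nonneg hp.le (by linarith : 0 ≤ s' + a*h)
        have q2 := mul_pos hp hp
        have q3 : v' + 2*(a*h)*s' + 16*(a*h)^2
          = v' + 2*((a*h)*(s' + a*h)) + 14*((a*h)*(a*h)) := by ring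
        rw [q3]; linarith
      have pz2 : v' + 2*(a*h)*s' + 16*(a*h)^2 ≤ v' + 2*h'*s' + 16*h'^2 := by
        have q1 := mul_nonneg (sub_nonneg.2 hh1) (by linarith : 0 ≤ 2*s' + 16*(h' + a*h))
        linarith
      have an := Psi_anti s' (v' + 2*(a*h)*s' + 16*(a*h)^2) (v' + 2*h'*s' + 16*h'^2)
        pz1 pz2
      have := mul_le_mul_of_nonneg_left (an.trans st) heps.le
      rw [hxt' r]
      linarith
  · have k1 : (g - gc) * (x - u) ≤ (h' - a*h) * (x + u) := by
      have b1 : (g-gc)*(x-u) ≤ |g-gc| * |x-u| := by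
        rw [← abs_mul]; exact le_abs_self _
      refine b1.trans (mul_le_mul hgcabs.1 ?_ (abs_nonneg _) (by linarith))
      rw [abs_le]; constructor <;> linarith
    have k2 : gc * (x - u) ≤ gt * (xt - u) := by
      by_cases hc : gc * xt < gc * x
      · rw [if_pos hc] at hgt
        have hne : xt < x := by
          rcases hxx.eq_or_lt with q | q
          · rw [q] at hc; exact absurd hc (lt_irrefl _)
          · exact q
        have hx00 : x = 0 := by
          rcases max_choice xt 0 with q | q
          · rw [hx, q] at hne; exact absurd hne (lt_irrefl _)
          · rw [hx, q]
        have : 0 < gc := by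
          by_contra hneg
          nlinarith
        rw [hgt, hx00]
        nlinarith
      · rw [if_neg hc] at hgt
        rw [hgt]
        linarith
    linarith
  · rcases hgtc with r | r
    · rw [r]; simp; positivity
    · rw [r]; exact hgcabs.2

lemma disc_succ (lam a : ℕ → ℝ) (T : ℕ) :
    ∑ t ∈ Finset.Icc 1 (T+1), (∏ i ∈ Finset.Icc t (T+1-1), lam i) * a t
     = lam T * (∑ t ∈ Finset.Icc 1 T, (∏ i ∈ Finset.Icc t (T-1), lam i) * a t) + a (T+1) := by
  rw [Finset.sum_Icc_succ_top (by omega), Finset.mul_sum]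
  congr 1
  · apply Finset.sum_congr rfl
    intro t ht
    rw [Finset.mem_Icc] at ht
    obtain ⟨m, rfl⟩ : ∃ m, T = m + 1 := ⟨T-1, by omega⟩
    simp only [Nat.add_sub_cancel]
    rw [Finset.prod_Icc_succ_top (by omega)]
    ring
  · simp

lemma disc_le (lam a Y : ℕ → ℝ) (hlam : ∀ t, 0 < lam t) (h0 : 0 ≤ Y 0)
    (hs : ∀ n, a (n+1) ≤ Y (n+1) - lam n * Y n) (T : ℕ) :
    ∑ t ∈ Finset.Icc 1 T, (∏ i ∈ Finset.Icc t (T-1), lam i) * a t ≤ Y T := by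
  induction T with
  | zero => simpa using h0
  | succ n ih =>
    rw [disc_succ]
    have := mul_le_mul_of_nonneg_left ih (hlam n).le
    have := hs n
    linarith

lemma G_succ (lam g : ℕ → ℝ) (hlam : ∀ t, 0 < lam t) (G : ℕ → ℝ)  (hG0 : G 0 = 0)
    (hGdef : ∀ t, ∀ (ht : 1 ≤ t), G t = (Finset.Icc 1 t).sup'
      (Finset.nonempty_Icc.mpr ht) (fun i => (∏ j ∈ Finset.Icc i (t-1), lam j) * |g i|)) (n : ℕ) :
    G (n+1) = max (lam n * G n) |g (n+1)| := by
  have key : ∀ i ∈ Finset.Icc 1 n, (∏ j ∈ Finset.Icc i (n+1-1), lam j) * |g i|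
      = lam n * ((∏ j ∈ Finset.Icc i (n-1), lam j) * |g i|) := by
    intro t ht
    rw [Finset.mem_Icc] at ht
    obtain ⟨m, rfl⟩ : ∃ m, n = m + 1 := ⟨n-1, by omega⟩
    simp only [Nat.add_sub_cancel]
    rw [Finset.prod_Icc_succ_top (by omega)]
    ring
  have last : (∏ j ∈ Finset.Icc (n+1) (n+1-1), lam j) * |g (n+1)| = |g (n+1)| := by simp
  rw [hGdef (n+1) (by omega)]
  apply le_antisymm
  · apply Finset.sup'_le
    intro i hi
    rw [Finset.mem_Icc] at hi
    rcases Nat.lt_or_ge n i with c | c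
    · have : i = n+1 := by omega
      subst this
      rw [last]
      exact le_max_right _ _
    · have hi' : i ∈ Finset.Icc 1 n := Finset.mem_Icc.2 ⟨hi.1, c⟩
      rw [key i hi']
      apply le_max_of_le_left
      apply mul_le_mul_of_nonneg_left _ (hlam n).le
      rw [hGdef n (by omega)]
      exact Finset.le_sup' (fun i => (∏ j ∈ Finset.Icc i (n-1), lam j) * |g i|) hi'
  · have hl : |g (n+1)| ≤ (Finset.Icc 1 (n+1)).sup' (Finset.nonempty_Icc.mpr (by omega))
        (fun i => (∏ j ∈ Finset.Icc i (n+1-1), lam j) * |g i|) := by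
      have := Finset.le_sup' (fun i => (∏ j ∈ Finset.Icc i (n+1-1), lam j) * |g i|)
        (Finset.mem_Icc.2 ⟨by omega, le_refl (n+1)⟩ : n+1 ∈ Finset.Icc 1 (n+1))
      exact last.symm.le.trans this
    apply max_le _ hl
    rcases Nat.eq_zero_or_pos n with c | c
    · subst c
      rw [hG0, mul_zero]
      exact (abs_nonneg _).trans hl
    · rw [hGdef n c]
      obtain ⟨i, hi, hie⟩ := Finset.exists_mem_eq_sup' (Finset.nonempty_Icc.mpr c)
        (fun i => (∏ j ∈ Finset.Icc i (n-1), lam j) * |g i|)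
      rw [hie, ← key i hi]
      apply Finset.le_sup' (fun i => (∏ j ∈ Finset.Icc i (n+1-1), lam j) * |g i|)
      rw [Finset.mem_Icc] at hi ⊢
      omega


/-- Discounted regret guarantee for the 1D FTRL-based magnitude
learner on `[0,∞)` (Algorithm 1). -/
theorem magnitude_learner_discounted_regret
    (eps : ℝ) (heps : 0 < eps)
    (lam : ℕ → ℝ) (hlam : ∀ t, 0 < lam t) (hlam0 : lam 0 = 1)
    (l : ℕ → ℝ → ℝ) (hconv : ∀ t, ConvexOn ℝ (Set.Ici 0) (l t))
    (v s h xt x g gclip gt : ℕ → ℝ)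
    (hv1 : v 1 = 0) (hs1 : s 1 = 0) (hh1 : h 1 = 0)
    (hxt : ∀ t, 1 ≤ t →
      (h t = 0 → xt t = 0) ∧
      (h t ≠ 0 → xt t =
        eps * erfi (s t / (2 * Real.sqrt (v t + 2 * h t * s t + 16 * (h t)^2)))
        - eps * h t / Real.sqrt (v t + 2 * h t * s t + 16 * (h t)^2)
          * Real.exp ((s t)^2 / (4 * (v t + 2 * h t * s t + 16 * (h t)^2)))))
    (hx : ∀ t, 1 ≤ t → x t = max (xt t) 0)
    (hg : ∀ t, 1 ≤ t → ∀ y ∈ Set.Ici (0:ℝ), l t (x t) + g t * (y - x t) ≤ l t y)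
    (hgclip : ∀ t, 1 ≤ t →
      gclip t = max (-(lam (t-1) * h t)) (min (g t) (lam (t-1) * h t)))
    (hh : ∀ t, 1 ≤ t → h (t+1) = max (lam (t-1) * h t) |g t|)
    (hgt : ∀ t, 1 ≤ t →
      gt t = if gclip t * xt t < gclip t * x t then 0 else gclip t)
    (hvrec : ∀ t, 1 ≤ t → v (t+1) = (lam (t-1))^2 * v t + (gt t)^2)
    (hsrec : ∀ t, 1 ≤ t → s (t+1) = lam (t-1) * s t - gt t)
    (T : ℕ) (hT : 1 ≤ T)
    (u : ℝ) (hu : 0 ≤ u)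
    (τ : ℕ) (hτ1 : 1 ≤ τ) (hτT : τ ≤ T)
    (V G : ℕ → ℝ)
    (hV : ∀ t, V t = ∑ i ∈ Finset.Icc 1 t, (∏ j ∈ Finset.Icc i (t-1), (lam j)^2) * (g i)^2)
    (hG0 : G 0 = 0)
    (hGdef : ∀ t, ∀ (ht : 1 ≤ t), G t = (Finset.Icc 1 t).sup'
      (Finset.nonempty_Icc.mpr ht) (fun i => (∏ j ∈ Finset.Icc i (t-1), lam j) * |g i|))
    (S M1 M2 : ℝ)
    (hS : S = 8 * G T * (1 + Real.sqrt (Real.log (2 * u * eps⁻¹ + 1)))^2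
        + 2 * Real.sqrt (V T + 16 * (G T)^2)
          * (1 + Real.sqrt (Real.log (2 * u * eps⁻¹ + 1))))
    (hM2 : M2 = (Finset.Icc (T - τ + 1) T).sup' (Finset.nonempty_Icc.mpr (by omega)) x)
    (hM1 : ∀ (h1 : 1 ≤ T - τ), M1 = (Finset.Icc 1 (T - τ)).sup' (Finset.nonempty_Icc.mpr h1) x)
    (hM1' : T - τ = 0 → M1 = 0) :
    ∑ t ∈ Finset.Icc 1 T, (∏ i ∈ Finset.Icc t (T-1), lam i) * (l t (x t) - l t u)
      ≤ eps * Real.sqrt (V T + 2 * G T * S + 16 * (G T)^2)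
        + u * (S + G T)
        + M2 * G T
        + (∏ t ∈ Finset.Icc (T - τ) (T-1), lam t) * M1 * G (T - τ) := by
  have hGs := G_succ lam g hlam G hG0 hGdef
  have hhG : ∀ n, h (n+1) = G n := by
    intro n
    induction n with
    | zero => rw [hG0]; exact hh1
    | succ n ih =>
      rw [hh (n+1) (by omega), hGs n, Nat.add_sub_cancel, ih]
  have inv : ∀ n, 0 ≤ h (n+1) ∧ 0 ≤ v (n+1) ∧ -h (n+1) ≤ s (n+1) ∧
      (h (n+1) = 0 → s (n+1) = 0 ∧ v (n+1) = 0) := by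
    intro n
    induction n with
    | zero => simp [hh1, hv1, hs1]
    | succ n ih =>
      exact (one_step eps (lam n) _ _ _ _ _ _ _ _ _ _ _ u heps (hlam n) hu ih.1 ih.2.1 ih.2.2.1
        ih.2.2.2 (hxt (n+1) (by omega)) (hx (n+1) (by omega)) (hgclip (n+1) (by omega))
        (hh (n+1) (by omega)) (hgt (n+1) (by omega)) (hvrec (n+1) (by omega))
        (hsrec (n+1) (by omega))).1
  have stp := fun n => (one_step eps (lam n) _ _ _ _ _ _ _ _ _ _ _ u heps (hlam n) hu
        (inv n).1 (inv n).2.1 (inv n).2.2.1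
        (inv n).2.2.2 (hxt (n+1) (by omega)) (hx (n+1) (by omega)) (hgclip (n+1) (by omega))
        (hh (n+1) (by omega)) (hgt (n+1) (by omega)) (hvrec (n+1) (by omega))
        (hsrec (n+1) (by omega))).2
  have hG0' : ∀ n, 0 ≤ G n := fun n => hhG n ▸ (inv n).1
  -- v ≤ V
  have hvV : ∀ n, v (n+1) ≤ V n := by
    intro n
    induction n with
    | zero => rw [hV 0]; simp [hv1]
    | succ n ih =>
      have e := disc_succ (fun j => lam j ^ 2) (fun i => g i ^ 2) n
      rw [← hV (n+1), ← hV n] at e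
      rw [e, hvrec (n+1) (by omega), Nat.add_sub_cancel]
      have := mul_le_mul_of_nonneg_left ih (sq_nonneg (lam n))
      have := (stp n).2.2.1
      linarith
  set N := T - τ with hN
  -- clipping part
  have hM2x : ∀ t, N + 1 ≤ t → t ≤ T → x t ≤ M2 := by
    intro t h1 h2
    rw [hM2]
    exact Finset.le_sup' x (Finset.mem_Icc.2 ⟨h1, h2⟩)
  have hM20 : 0 ≤ M2 := by
    obtain ⟨m, hm⟩ : ∃ m, T = m + 1 := ⟨T-1, by omega⟩
    refine le_trans (stp m).2.2.2 ?_
    rw [← hm]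
    exact hM2x T (by omega) le_rfl
  have hM1x : ∀ t, 1 ≤ t → t ≤ N → x t ≤ M1 := by
    intro t h1 h2
    rw [hM1 (by omega)]
    exact Finset.le_sup' x (Finset.mem_Icc.2 ⟨h1, h2⟩)
  have hGinc : ∀ n, 0 ≤ G (n+1) - lam n * G n := by
    intro n
    rw [hGs n]
    linarith [le_max_left (lam n * G n) |g (n+1)|]
  set c : ℕ → ℝ := fun t => (G t - lam (t-1) * G (t-1)) * x t with hc
  have phase1 : ∀ n, n ≤ N → ∑ t ∈ Finset.Icc 1 n, (∏ i ∈ Finset.Icc t (n-1), lam i) * c t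
      ≤ M1 * G n := by
    intro n
    induction n with
    | zero => simp [hG0]
    | succ n ih =>
      intro hn
      rw [disc_succ]
      have h1 := mul_le_mul_of_nonneg_left (ih (by omega)) (hlam n).le
      have h2 := mul_le_mul_of_nonneg_left (hM1x (n+1) (by omega) hn) (hGinc n)
      simp only [hc, Nat.add_sub_cancel] at h1 ⊢
      linarith
  have phase2 : ∀ n, N + n ≤ T →
      ∑ t ∈ Finset.Icc 1 (N+n), (∏ i ∈ Finset.Icc t (N+n-1), lam i) * c t
      ≤ M2 * G (N+n) + (∏ t ∈ Finset.Icc N (N+n-1), lam t) * M1 * G N := by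
    intro n
    induction n with
    | zero =>
      intro _
      have h1 := phase1 N le_rfl
      have h2 := mul_nonneg hM20 (hG0' N)
      rcases Nat.eq_zero_or_pos N with hz | hz
      · rw [hz]; simp [hG0]
      · rw [Nat.add_zero, Finset.Icc_eq_empty (a := N) (b := N-1) (by omega)]
        simp only [Finset.prod_empty]
        linarith
    | succ n ih =>
      intro hn
      rw [← Nat.add_assoc, disc_succ]
      have h1 := mul_le_mul_of_nonneg_left (ih (by omega)) (hlam (N+n)).le
      have h2 := mul_le_mul_of_nonneg_left (hM2x (N+n+1) (by omega) (by omega)) (hGinc (N+n))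
      have h3 : (∏ t ∈ Finset.Icc N (N+n+1-1), lam t) * M1 * G N
          = lam (N+n) * ((∏ t ∈ Finset.Icc N (N+n-1), lam t) * M1 * G N) := by
        rcases Nat.eq_zero_or_pos N with hz | hz
        · rw [hz, hG0]; simp
        · obtain ⟨m, hm⟩ : ∃ m, N + n = m + 1 := ⟨N+n-1, by omega⟩
          rw [hm]
          simp only [Nat.add_sub_cancel]
          rw [Finset.prod_Icc_succ_top (by omega)]
          ring
      rw [h3]
      simp only [hc, Nat.add_sub_cancel] at h1 ⊢
      linarith
  have hph := phase2 τ (by omega)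
  rw [show N + τ = T by omega] at hph
  -- main part
  have main := disc_le lam (fun t => (l t (x t) - l t u) - c t)
    (fun n => -(eps * Psi (v (n+1) + 2 * h (n+1) * s (n+1) + 16 * h (n+1)^2) (s (n+1)))
      + u * s (n+1) + u * G n) hlam
    (by simp [hh1, hs1, hv1, hG0, Psi_zero])
    (by
      intro n
      have h1 := hg (n+1) (by omega) u hu
      obtain ⟨k1, k2, _, _⟩ := stp n
      have h2 := hsrec (n+1) (by omega)
      have e1 := hhG n
      have e2 := hhG (n+1)
      simp only [hc, Nat.add_sub_cancel] at h1 h2 k1 k2 ⊢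
      rw [e1, e2] at k2
      rw [h2] at k1 ⊢
      linarith) T
  have split : ∑ t ∈ Finset.Icc 1 T, (∏ i ∈ Finset.Icc t (T-1), lam i) * (l t (x t) - l t u)
     = ∑ t ∈ Finset.Icc 1 T, (∏ i ∈ Finset.Icc t (T-1), lam i) * ((l t (x t) - l t u) - c t)
      + ∑ t ∈ Finset.Icc 1 T, (∏ i ∈ Finset.Icc t (T-1), lam i) * c t := by
    rw [← Finset.sum_add_distrib]
    apply Finset.sum_congr rfl
    intro t _
    ring
  have fin := Psi_final eps u (v (T+1)) (V T) (h (T+1)) (s (T+1)) S heps hu (inv T).2.1 (hvV T)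
    (inv T).1 (inv T).2.2.1 (fun q => ((inv T).2.2.2 q).1) (by rw [hhG T]; exact hS)
  rw [hhG T] at fin
  simp only [hhG T] at main
  rw [split]
  linarith
end
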